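/- If G is absolutely continuous on [A,B] and F̂ is the least concave majorant of G, then the Dirichlet energy of F̂ is at most that of G: ∫_A^B (F̂'(τ))² dτ ≤ ∫_A^B (G'(τ))² dτ. -/

import Mathlib

open MeasureTheory intervalIntegral Set

open Filter Topology

/-- The values at `τ` of the chords of `G` with endpoints in `[A, B]` on either side of `τ`. -/
def chordValues (G : ℝ → ℝ) (A B τ : ℝ) : Set ℝ :=
  {y : ℝ | ∃ s t : ℝ, A ≤ s ∧ s ≤ τ ∧ τ ≤ t ∧ t ≤ B ∧ s < t ∧
    y = ((t - τ) / (t - s)) * G s + ((τ - s) / (t - s)) * G t}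

/-- A function whose integrals over the superlevel sets of `f` agree with those of `f` has at least
the same `L²` norm as `f`. -/
theorem integral_sq_le_of_forall_setIntegral_superlevel_eq {Ω : Type*} [mΩ : MeasurableSpace Ω]
    {μ : Measure Ω} [IsFiniteMeasure μ] {f g : Ω → ℝ} (hfm : Measurable f)
    (hf2 : Integrable (fun x => f x ^ 2) μ) (hg : Integrable g μ)
    (hg2 : Integrable (fun x => g x ^ 2) μ) (htot : ∫ x, f x ∂μ = ∫ x, g x ∂μ)
    (hlevel : ∀ c, ∫ x in f ⁻¹' Ioi c, f x ∂μ = ∫ x in f ⁻¹' Ioi c, g x ∂μ) :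
    ∫ x, f x ^ 2 ∂μ ≤ ∫ x, g x ^ 2 ∂μ := by
  have hfL : MemLp f 2 μ := (memLp_two_iff_integrable_sq hfm.aestronglyMeasurable).2 hf2
  have hgL : MemLp g 2 μ := (memLp_two_iff_integrable_sq hg.aestronglyMeasurable).2 hg2
  have hf : Integrable f μ := hfL.integrable one_le_two
  have hfg : Integrable (fun x => f x * g x) μ := hfL.integrable_mul hgL
  have hsets : ∀ s : Set ℝ, MeasurableSet s → ∫ x in f ⁻¹' s, f x ∂μ = ∫ x in f ⁻¹' s, g x ∂μ := by
    refine MeasurableSpace.induction_on_inter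
      (C := fun s _ => ∫ x in f ⁻¹' s, f x ∂μ = ∫ x in f ⁻¹' s, g x ∂μ)
      ((BorelSpace.measurable_eq (α := ℝ)).trans (borel_eq_generateFrom_Ioi ℝ)) isPiSystem_Ioi
      (by simp) ?_ ?_ ?_
    · rintro _ ⟨c, rfl⟩
      exact hlevel c
    · intro t ht h
      have h1 := integral_add_compl (hfm ht) hf
      have h2 := integral_add_compl (hfm ht) hg
      rw [preimage_compl]
      linarith
    · intro s hd hm h
      have hd' : Pairwise (Function.onFun Disjoint fun i => f ⁻¹' s i) :=
        fun i j hij => (hd hij).preimage f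
      rw [preimage_iUnion, integral_iUnion (fun i => hfm (hm i)) hd' hf.integrableOn,
        integral_iUnion (fun i => hfm (hm i)) hd' hg.integrableOn]
      exact tsum_congr h
  set m : MeasurableSpace Ω := MeasurableSpace.comap f inferInstance
  have hm : m ≤ mΩ := hfm.comap_le
  have hfsm : StronglyMeasurable[m] f := (comap_measurable f).stronglyMeasurable
  have hcond : f =ᵐ[μ] μ[g | m] := by
    refine ae_eq_condExp_of_forall_setIntegral_eq hm hg (fun _ _ _ => hf.integrableOn) ?_
      hfsm.aestronglyMeasurable
    rintro _ ⟨s, hs, rfl⟩ _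
    exact hsets s hs
  have hmul : μ[f * g | m] =ᵐ[μ] f * μ[g | m] :=
    condExp_mul_of_stronglyMeasurable_left hfsm hfg hg
  have hinner : ∫ x, f x * g x ∂μ = ∫ x, f x ^ 2 ∂μ := by
    have h1 : ∫ x, (μ[f * g | m]) x ∂μ = ∫ x, f x * g x ∂μ := integral_condExp hm
    rw [← h1]
    refine integral_congr_ae ?_
    filter_upwards [hcond, hmul] with x hx hx'
    rw [hx', Pi.mul_apply, ← hx, sq]
  have hnn : 0 ≤ ∫ x, (g x - f x) ^ 2 ∂μ := integral_nonneg fun x => sq_nonneg _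
  have hexp : ∫ x, (g x - f x) ^ 2 ∂μ
      = ∫ x, g x ^ 2 ∂μ - 2 * ∫ x, f x * g x ∂μ + ∫ x, f x ^ 2 ∂μ := by
    rw [← MeasureTheory.integral_const_mul, ← integral_sub hg2 (hfg.const_mul 2),
      ← integral_add (f := fun x => g x ^ 2 - 2 * (f x * g x)) (hg2.sub (hfg.const_mul 2)) hf2]
    exact integral_congr_ae (.of_forall fun x => by ring)
  linarith

section Chords

variable {A B : ℝ} {G : ℝ → ℝ}

theorem le_affine_of_mem_chordValues {c l τ y : ℝ} (h : ∀ x ∈ Icc A B, G x ≤ c + l * x)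
    (hy : y ∈ chordValues G A B τ) : y ≤ c + l * τ := by
  obtain ⟨s, t, hs, hsτ, hτt, ht, hst, rfl⟩ := hy
  have h0 : 0 < t - s := sub_pos.2 hst
  have h1 := h s ⟨hs, by linarith⟩
  have h2 := h t ⟨by linarith, ht⟩
  have h3 := mul_le_mul_of_nonneg_left h1 (div_nonneg (sub_nonneg.2 hτt) h0.le)
  have h4 := mul_le_mul_of_nonneg_left h2 (div_nonneg (sub_nonneg.2 hsτ) h0.le)
  refine (add_le_add h3 h4).trans_eq ?_
  field_simp
  ring

theorem self_mem_chordValues (hAB : A < B) {τ : ℝ} (hτ : τ ∈ Icc A B) :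
    G τ ∈ chordValues G A B τ := by
  rcases hτ.2.eq_or_lt with rfl | h
  · refine ⟨A, τ, le_rfl, hτ.1, le_rfl, le_rfl, hAB, ?_⟩
    simp [div_self (sub_pos.2 hAB).ne']
  · refine ⟨τ, B, hτ.1, le_rfl, hτ.2, le_rfl, h, ?_⟩
    simp [div_self (sub_pos.2 h).ne']

theorem bddAbove_chordValues (hG : ContinuousOn G (Icc A B)) (τ : ℝ) :
    BddAbove (chordValues G A B τ) := by
  obtain ⟨M, hM⟩ := isCompact_Icc.bddAbove_image hG
  refine ⟨M + 0 * τ, fun y hy => le_affine_of_mem_chordValues (fun x hx => ?_) hy⟩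
  simpa using hM (mem_image_of_mem G hx)

/-- At interior points some affine function lies above `G` and touches the supremum of chords. -/
theorem exists_affine_ge_of_chordValues_le {τ v : ℝ} (hτ : τ ∈ Ioo A B)
    (hv : ∀ y ∈ chordValues G A B τ, y ≤ v) :
    ∃ l, ∀ x ∈ Icc A B, G x ≤ v + l * (x - τ) := by
  obtain ⟨l, hl1, hl2⟩ := exists_between_of_forall_le
    (s := (fun t => (G t - v) / (t - τ)) '' Ioc τ B)
    (t := (fun s => (v - G s) / (τ - s)) '' Ico A τ)
    ((nonempty_Ioc.2 hτ.2).image _) ((nonempty_Ico.2 hτ.1).image _) (by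
      rintro _ ⟨t, ht, rfl⟩ _ ⟨s, hs, rfl⟩
      have h := hv _ ⟨s, t, hs.1, hs.2.le, ht.1.le, ht.2, hs.2.trans ht.1, rfl⟩
      have h1 : 0 < t - τ := sub_pos.2 ht.1
      have h2 : 0 < τ - s := sub_pos.2 hs.2
      have h3 : 0 < t - s := by linarith
      rw [div_mul_eq_mul_div, div_mul_eq_mul_div, ← add_div, div_le_iff₀ h3] at h
      simp only
      rw [div_le_div_iff₀ h1 h2]
      nlinarith)
  refine ⟨l, fun x hx => ?_⟩
  rcases lt_trichotomy x τ with h | rfl | h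
  · have := hl2 (mem_image_of_mem _ ⟨hx.1, h⟩)
    rw [le_div_iff₀ (sub_pos.2 h)] at this
    linarith
  · simpa using hv _ (self_mem_chordValues (hτ.1.trans hτ.2) hx)
  · have := hl1 (mem_image_of_mem _ ⟨h, hx.2⟩)
    rw [div_le_iff₀ (sub_pos.2 h)] at this
    linarith

end Chords

section Majorant

variable {A B : ℝ} {G F : ℝ → ℝ}

/-- `F` is the least concave majorant of `G` on `[A, B]`, described by affine majorants. -/
structure IsAffineEnvelope (A B : ℝ) (G F : ℝ → ℝ) : Prop where
  le : ∀ x ∈ Icc A B, G x ≤ F x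
  le_affine : ∀ c l : ℝ, (∀ x ∈ Icc A B, G x ≤ c + l * x) → ∀ x ∈ Icc A B, F x ≤ c + l * x
  exists_affine : ∀ τ ∈ Ioo A B, ∃ l, ∀ x ∈ Icc A B, G x ≤ F τ + l * (x - τ)

theorem isAffineEnvelope_sSup_chordValues (hAB : A < B) (hG : ContinuousOn G (Icc A B))
    (hF : ∀ τ ∈ Icc A B, F τ = sSup (chordValues G A B τ)) : IsAffineEnvelope A B G F where
  le x hx := by
    rw [hF x hx]
    exact le_csSup (bddAbove_chordValues hG x) (self_mem_chordValues hAB hx)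
  le_affine c l h x hx := by
    rw [hF x hx]
    exact csSup_le ⟨_, self_mem_chordValues hAB hx⟩ fun y hy => le_affine_of_mem_chordValues h hy
  exists_affine τ hτ := by
    refine exists_affine_ge_of_chordValues_le hτ fun y hy => ?_
    rw [hF τ (Ioo_subset_Icc_self hτ)]
    exact le_csSup (bddAbove_chordValues hG τ) hy

namespace IsAffineEnvelope

theorem exists_supergradient (h : IsAffineEnvelope A B G F) {τ : ℝ} (hτ : τ ∈ Ioo A B) :
    ∃ l, ∀ x ∈ Icc A B, F x ≤ F τ + l * (x - τ) := by
  obtain ⟨l, hl⟩ := h.exists_affine τ hτ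
  refine ⟨l, fun x hx => ?_⟩
  have := h.le_affine (F τ - l * τ) l (fun y hy => by linarith [hl y hy]) x hx
  linarith

theorem concaveOn (h : IsAffineEnvelope A B G F) : ConcaveOn ℝ (Ioo A B) F := by
  refine ⟨convex_Ioo A B, fun x hx y hy a b ha hb hab => ?_⟩
  have hz := convex_Ioo A B hx hy ha hb hab
  simp only [smul_eq_mul] at hz ⊢
  obtain ⟨l, hl⟩ := h.exists_supergradient hz
  have h1 := mul_le_mul_of_nonneg_left (hl x (Ioo_subset_Icc_self hx)) ha
  have h2 := mul_le_mul_of_nonneg_left (hl y (Ioo_subset_Icc_self hy)) hb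
  obtain rfl : b = 1 - a := by linarith
  nlinarith

theorem hasDerivAt_le (h : IsAffineEnvelope A B G F) {τ f' : ℝ} (hτ : τ ∈ Ioo A B)
    (hf : HasDerivAt F f' τ) {x : ℝ} (hx : x ∈ Icc A B) : F x ≤ F τ + f' * (x - τ) := by
  obtain ⟨l, hl⟩ := h.exists_supergradient hτ
  have hmax : IsLocalMax (fun x => F x - l * x) τ := by
    filter_upwards [Icc_mem_nhds hτ.1 hτ.2] with y hy
    linarith [hl y hy]
  have hd : HasDerivAt (fun x => F x - l * x) (f' - l * 1) τ :=
    hf.sub ((hasDerivAt_id τ).const_mul l)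
  have := hmax.hasDerivAt_eq_zero hd
  obtain rfl : f' = l := by linarith
  exact hl x hx

/-- `F` is continuous at an endpoint `p` at which it agrees with `G`; the sign `σ` says which. -/
theorem continuousWithinAt_endpoint (h : IsAffineEnvelope A B G F) (hG : ContinuousOn G (Icc A B))
    {p σ : ℝ} (hp : p ∈ Icc A B) (hσ : ∀ x ∈ Icc A B, |x - p| = σ * (x - p)) (hFp : F p ≤ G p) :
    ContinuousWithinAt F (Icc A B) p := by
  obtain ⟨M, hM⟩ := isCompact_Icc.bddAbove_image hG
  have hFp' : F p = G p := hFp.antisymm (h.le p hp)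
  have hlow := hG p hp
  rw [ContinuousWithinAt, tendsto_order] at hlow ⊢
  refine ⟨fun a ha => ?_, fun a ha => ?_⟩
  · filter_upwards [hlow.1 a (hFp' ▸ ha), self_mem_nhdsWithin] with x hx hx'
    exact hx.trans_le (h.le x hx')
  · rw [hFp'] at ha
    obtain ⟨b, hb, hba⟩ := exists_between ha
    obtain ⟨δ, hδ, hδb⟩ := Metric.mem_nhdsWithin_iff.1 (hlow.2 b hb)
    have hMb : 0 ≤ |M - b| / δ := by positivity
    set C := |M - b| / δ with hC
    have hmaj : ∀ x ∈ Icc A B, G x ≤ b + C * |x - p| := by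
      intro x hx
      rcases lt_or_ge (|x - p|) δ with hxp | hxp
      · have : G x < b := hδb ⟨by rwa [Metric.mem_ball, Real.dist_eq], hx⟩
        have : 0 ≤ C * |x - p| := by positivity
        linarith
      · have h1 : C * δ ≤ C * |x - p| := mul_le_mul_of_nonneg_left hxp hMb
        have h2 : C * δ = |M - b| := div_mul_cancel₀ _ hδ.ne'
        have h3 : G x ≤ M := hM (mem_image_of_mem G hx)
        linarith [le_abs_self (M - b)]
    have hFle : ∀ x ∈ Icc A B, F x ≤ b + C * |x - p| := by
      intro x hx
      have := h.le_affine (b - C * σ * p) (C * σ)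
        (fun y hy => by have := hmaj y hy; rw [hσ y hy] at this; linarith) x hx
      rw [hσ x hx]
      linarith
    have hlim : ContinuousWithinAt (fun x => b + C * |x - p|) (Icc A B) p := by fun_prop
    filter_upwards [hlim.eventually (gt_mem_nhds (by simpa using hba)), self_mem_nhdsWithin]
      with x hx hx'
    exact (hFle x hx').trans_lt hx

theorem continuousOn (h : IsAffineEnvelope A B G F) (hG : ContinuousOn G (Icc A B))
    (hA : F A ≤ G A) (hB : F B ≤ G B) : ContinuousOn F (Icc A B) := by
  intro x hx
  rcases hx.1.eq_or_lt with rfl | hAx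
  · refine h.continuousWithinAt_endpoint hG (σ := 1) hx (fun y hy => ?_) hA
    rw [one_mul, abs_of_nonneg (sub_nonneg.2 hy.1)]
  rcases hx.2.eq_or_lt with rfl | hxB
  · refine h.continuousWithinAt_endpoint hG (σ := -1) hx (fun y hy => ?_) hB
    rw [abs_of_nonpos (sub_nonpos.2 hy.2)]
    ring
  · exact ((h.concaveOn.continuousOn isOpen_Ioo).continuousAt
      (Ioo_mem_nhds hAx hxB)).continuousWithinAt

theorem ae_differentiableAt (h : IsAffineEnvelope A B G F) :
    ∀ᵐ x, x ∈ Ioo A B → DifferentiableAt ℝ F x := by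
  have hlip := h.concaveOn.locallyLipschitzOn isOpen_Ioo
  have hbv : LocallyBoundedVariationOn F (Ioo A B) := by
    intro a b ha hb
    have hsub : Icc a b ⊆ Ioo A B := fun x hx => ⟨ha.1.trans_le hx.1, hx.2.trans_lt hb.2⟩
    obtain ⟨K, hK⟩ := (hlip.mono hsub).exists_lipschitzOnWith_of_compact isCompact_Icc
    rcases le_or_gt a b with hab | hab
    · have := hK.locallyBoundedVariationOn a b (left_mem_Icc.2 hab) (right_mem_Icc.2 hab)
      rw [inter_self] at this
      exact this.mono inter_subset_right
    · simp [Icc_eq_empty hab.not_ge, BoundedVariationOn]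
  filter_upwards [hbv.ae_differentiableWithinAt_of_mem] with x hx hx'
  exact (hx hx').differentiableAt (isOpen_Ioo.mem_nhds hx')

theorem integral_deriv_eq_sub (h : IsAffineEnvelope A B G F) (hFc : ContinuousOn F (Icc A B))
    (hint : IntegrableOn (deriv F) (Icc A B)) {x : ℝ} (hx : x ∈ Icc A B) :
    ∫ τ in A..x, deriv F τ = F x - F A := by
  have hsub : Icc A x ⊆ Icc A B := Icc_subset_Icc_right hx.2
  have hae : ∀ᵐ y, y ∈ uIoc A x → deriv F y = derivWithin F (Ioi y) y := by
    have hnull : ∀ᵐ y : ℝ, y ≠ B := by simp [ae_iff]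
    filter_upwards [h.ae_differentiableAt, hnull] with y hy hyB hyx
    rw [uIoc_of_le hx.1] at hyx
    exact ((hy ⟨hyx.1, lt_of_le_of_ne (hyx.2.trans hx.2) hyB⟩).derivWithin
      (uniqueDiffWithinAt_Ioi y)).symm
  have hii : IntervalIntegrable (deriv F) volume A x :=
    (intervalIntegrable_iff_integrableOn_Icc_of_le hx.1).2 (hint.mono_set hsub)
  rw [integral_congr_ae hae]
  refine integral_eq_sub_of_hasDeriv_right_of_le hx.1 (hFc.mono hsub) (fun y hy => ?_)
    (hii.congr_ae ((ae_restrict_iff' measurableSet_uIoc).2 hae))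
  have hyI : y ∈ interior (Ioo A B) := by
    rw [interior_Ioo]
    exact ⟨hy.1, hy.2.trans_le hx.2⟩
  have := (h.concaveOn.neg.differentiableWithinAt_Ioi_of_mem_interior hyI).neg
  rw [neg_neg] at this
  exact this.hasDerivWithinAt

/-- An affine function of slope `l` touching `G` from above touches it where `F` agrees with `G`,
and this point splits the superlevel from the sublevel set of `F'` at `l`. -/
theorem exists_contact (h : IsAffineEnvelope A B G F) (hAB : A < B)
    (hG : ContinuousOn G (Icc A B)) (l : ℝ) :
    ∃ x ∈ Icc A B, F x = G x ∧
      ∀ τ ∈ Ioo A B, DifferentiableAt ℝ F τ → 0 ≤ (deriv F τ - l) * (x - τ) := by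
  obtain ⟨x, hx, hmax⟩ := isCompact_Icc.exists_isMaxOn (nonempty_Icc.2 hAB.le)
    (f := fun y => G y - l * y) (hG.sub (by fun_prop))
  have hF : ∀ y ∈ Icc A B, F y ≤ G x - l * x + l * y := by
    refine h.le_affine _ l fun y hy => ?_
    have : G y - l * y ≤ G x - l * x := hmax hy
    linarith
  have hxx : F x = G x := (by linarith [hF x hx] : F x ≤ G x).antisymm (h.le x hx)
  refine ⟨x, hx, hxx, fun τ hτ hd => ?_⟩
  have h1 := h.hasDerivAt_le hτ hd.hasDerivAt hx
  have h2 := hF τ (Ioo_subset_Icc_self hτ)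
  nlinarith

theorem setIntegral_superlevel_deriv_eq_zero (h : IsAffineEnvelope A B G F) (hAB : A < B)
    (hG : ContinuousOn G (Icc A B)) {k : ℝ → ℝ} (hk : IntegrableOn k (Icc A B))
    (hk0 : ∀ x ∈ Icc A B, F x = G x → ∫ τ in A..x, k τ = 0) (c : ℝ) :
    ∫ τ in deriv F ⁻¹' Ioi c, k τ ∂volume.restrict (Icc A B) = 0 := by
  choose p hpI hpF hp using fun n : ℕ => h.exists_contact hAB hG (c + 1 / ((n : ℝ) + 1))
  have hzero : ∀ n, ∫ τ in Icc A B, (Iic (p n)).indicator k τ = 0 := by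
    intro n
    rw [setIntegral_indicator measurableSet_Iic, ← hk0 _ (hpI n) (hpF n),
      integral_of_le (hpI n).1, ← integral_Icc_eq_integral_Ioc]
    congr 2
    ext τ
    simp only [mem_inter_iff, mem_Icc, mem_Iic]
    exact ⟨fun hτ => ⟨hτ.1.1, hτ.2⟩, fun hτ => ⟨⟨hτ.1, hτ.2.trans (hpI n).2⟩, hτ.2⟩⟩
  rw [← MeasureTheory.integral_indicator (measurable_deriv F measurableSet_Ioi)]
  have hlim : Tendsto (fun n => ∫ τ in Icc A B, (Iic (p n)).indicator k τ) atTop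
      (𝓝 (∫ τ in Icc A B, (deriv F ⁻¹' Ioi c).indicator k τ)) := by
    refine tendsto_integral_of_dominated_convergence (fun τ => ‖k τ‖)
      (fun n => hk.aestronglyMeasurable.indicator measurableSet_Iic) hk.norm
      (fun n => .of_forall fun τ => norm_indicator_le_norm_self _ _) ?_
    rw [ae_restrict_iff' measurableSet_Icc]
    have hnull : ∀ y : ℝ, ∀ᵐ τ : ℝ, τ ≠ y := fun y => by simp [ae_iff]
    filter_upwards [h.ae_differentiableAt, hnull A, hnull B, ae_all_iff.2 fun n => hnull (p n)]
      with τ hd hA hB hpn hτ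
    have hτ' : τ ∈ Ioo A B := ⟨lt_of_le_of_ne hτ.1 hA.symm, lt_of_le_of_ne hτ.2 hB⟩
    refine tendsto_const_nhds.congr' ?_
    by_cases hc : c < deriv F τ
    · have hlt : Tendsto (fun n : ℕ => c + 1 / ((n : ℝ) + 1)) atTop (𝓝 c) := by
        simpa using tendsto_const_nhds.add (tendsto_one_div_add_atTop_nhds_zero_nat (𝕜 := ℝ))
      filter_upwards [hlt.eventually (gt_mem_nhds hc)] with n hn
      have : 0 ≤ p n - τ := nonneg_of_mul_nonneg_right (hp n τ hτ' (hd hτ')) (sub_pos.2 hn)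
      rw [indicator_of_mem (show τ ∈ deriv F ⁻¹' Ioi c from hc),
        indicator_of_mem (show τ ∈ Iic (p n) from sub_nonneg.1 this)]
    · refine .of_forall fun n => ?_
      have hpos : 0 < 1 / ((n : ℝ) + 1) := by positivity
      have hn : τ ∉ Iic (p n) := by
        intro hle
        have h1 : 0 < p n - τ := sub_pos.2 (lt_of_le_of_ne hle (hpn n))
        nlinarith [hp n τ hτ' (hd hτ')]
      simp only [indicator_of_notMem (show τ ∉ deriv F ⁻¹' Ioi c from hc), indicator_of_notMem hn]
  simp only [hzero] at hlim
  exact tendsto_nhds_unique hlim tendsto_const_nhds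

end IsAffineEnvelope

end Majorant

/-- If `G` is absolutely continuous on `[A,B]` (with derivative `g` square-integrable) and
`F̂` is the least concave majorant of `G` (given by the sup of chords), then the Dirichlet
energy of `F̂` is at most that of `G`. -/
theorem stmt2 (A B : ℝ) (hAB : A < B) (G g Fhat : ℝ → ℝ)
    (hg : IntegrableOn g (Set.Icc A B))
    (hg2 : IntegrableOn (fun τ => g τ ^ 2) (Set.Icc A B))
    (hG : ∀ t ∈ Set.Icc A B, G t = G A + ∫ τ in A..t, g τ)
    (hFhat : ∀ τ ∈ Set.Icc A B, Fhat τ =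
      sSup {y : ℝ | ∃ s t : ℝ, A ≤ s ∧ s ≤ τ ∧ τ ≤ t ∧ t ≤ B ∧ s < t ∧
        y = ((t - τ) / (t - s)) * G s + ((τ - s) / (t - s)) * G t}) :
    ∫ τ in Set.Icc A B, (deriv Fhat τ) ^ 2 ≤ ∫ τ in Set.Icc A B, (g τ) ^ 2 := by
  have hGc : ContinuousOn G (Icc A B) := by
    have := continuousOn_primitive_interval (μ := volume) (f := g) (a := A) (b := B)
      (by rwa [uIcc_of_le hAB.le])
    rw [uIcc_of_le hAB.le] at this
    exact (continuousOn_const.add this).congr hG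
  have henv : IsAffineEnvelope A B G Fhat := isAffineEnvelope_sSup_chordValues hAB hGc hFhat
  have hFA : Fhat A ≤ G A := by
    rw [hFhat A (left_mem_Icc.2 hAB.le)]
    refine csSup_le ⟨_, self_mem_chordValues hAB (left_mem_Icc.2 hAB.le)⟩ ?_
    rintro _ ⟨s, t, hs, hsA, -, -, hst, rfl⟩
    obtain rfl : s = A := hsA.antisymm hs
    simp [div_self (sub_pos.2 hst).ne']
  have hFB : Fhat B ≤ G B := by
    rw [hFhat B (right_mem_Icc.2 hAB.le)]
    refine csSup_le ⟨_, self_mem_chordValues hAB (right_mem_Icc.2 hAB.le)⟩ ?_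
    rintro _ ⟨s, t, -, -, hBt, ht, hst, rfl⟩
    obtain rfl : t = B := ht.antisymm hBt
    simp [div_self (sub_pos.2 hst).ne']
  have hFA' := hFA.antisymm (henv.le A (left_mem_Icc.2 hAB.le))
  have hFB' := hFB.antisymm (henv.le B (right_mem_Icc.2 hAB.le))
  by_cases hf2 : IntegrableOn (fun τ => deriv Fhat τ ^ 2) (Icc A B)
  swap
  · rw [integral_undef hf2]
    exact integral_nonneg fun τ => sq_nonneg _
  have hfm : Measurable (deriv Fhat) := measurable_deriv Fhat
  have hf : IntegrableOn (deriv Fhat) (Icc A B) :=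
    ((memLp_two_iff_integrable_sq hfm.aestronglyMeasurable).2 hf2).integrable one_le_two
  have hcontact : ∀ x ∈ Icc A B, Fhat x = G x → ∫ τ in A..x, (deriv Fhat τ - g τ) = 0 := by
    intro x hx hxx
    have hsub : Icc A x ⊆ Icc A B := Icc_subset_Icc_right hx.2
    rw [intervalIntegral.integral_sub
      ((intervalIntegrable_iff_integrableOn_Icc_of_le hx.1).2 (hf.mono_set hsub))
      ((intervalIntegrable_iff_integrableOn_Icc_of_le hx.1).2 (hg.mono_set hsub)),
      henv.integral_deriv_eq_sub (henv.continuousOn hGc hFA hFB) hf hx, hxx, hFA', hG x hx]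
    ring
  refine integral_sq_le_of_forall_setIntegral_superlevel_eq hfm hf2 hg hg2 ?_ fun c => ?_
  · rw [← sub_eq_zero, ← MeasureTheory.integral_sub hf hg, integral_Icc_eq_integral_Ioc,
      ← integral_of_le hAB.le]
    exact hcontact B (right_mem_Icc.2 hAB.le) hFB'
  · rw [← sub_eq_zero, ← MeasureTheory.integral_sub hf.integrableOn hg.integrableOn]
    exact henv.setIntegral_superlevel_deriv_eq_zero hAB hGc (hf.sub hg) hcontact c
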